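/- Let Γ be a connected simple graph. For every signature σ of Γ, the largest eigenvalue of the Laplacian matrix satisfies λ_max(L(−Γ)) ≥ λ_max(L(Γ, σ)), with equality if and only if (Γ, σ) is antibalanced. -/

import Mathlib

/-- The sign of a walk in a signed graph: the product of the signs of its edges. -/
def walkSign {V : Type*} (G : SimpleGraph V) (σ : Sym2 V → ℤˣ) {u v : V}
    (w : G.Walk u v) : ℤˣ :=
  (w.edges.map σ).prod

/-- A signed graph is balanced if every circle (cycle) is positive. -/
def sgBalanced {V : Type*} (G : SimpleGraph V) (σ : Sym2 V → ℤˣ) : Prop :=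
  ∀ ⦃v : V⦄ (w : G.Walk v v), w.IsCycle → walkSign G σ w = 1

/-- A signed graph is antibalanced if its negative (negating every sign) is balanced. -/
def sgAntibalanced {V : Type*} (G : SimpleGraph V) (σ : Sym2 V → ℤˣ) : Prop :=
  sgBalanced G (fun e => -σ e)

/-- The adjacency matrix of a signed graph: entry `(i, j)` is the sign of the edge `ij`
if it exists, and `0` otherwise. -/
def sgAdjMatrix {V : Type*} [Fintype V] (G : SimpleGraph V) [DecidableRel G.Adj]
    (σ : Sym2 V → ℤˣ) : Matrix V V ℝ :=
  Matrix.of fun i j => if G.Adj i j then ((σ s(i, j) : ℤ) : ℝ) else 0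

/-- The Laplacian matrix `L(Σ) = D(Γ) - A(Σ)` of a signed graph. -/
def sgLapMatrix {V : Type*} [Fintype V] [DecidableEq V] (G : SimpleGraph V)
    [DecidableRel G.Adj] (σ : Sym2 V → ℤˣ) : Matrix V V ℝ :=
  Matrix.diagonal (fun v => (G.degree v : ℝ)) - sgAdjMatrix G σ

/-- The largest eigenvalue of a real matrix, as the supremum of its spectrum. -/
noncomputable def maxEigenvalue {V : Type*} [Fintype V] [DecidableEq V]
    (M : Matrix V V ℝ) : ℝ :=
  sSup (spectrum ℝ M)

/-! Entrywise, the signless Laplacian `L(-Γ)` is the absolute value of `L(Γ, σ)`, so the claim is an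
instance of the symmetric case of Wielandt's theorem. If `|M i j| ≤ N i j`, then replacing a top
eigenvector `x` of `M` by `|x|` can only increase the quadratic form, so `λ_max(M) ≤ λ_max(N)`.
If equality holds, `|x|` is a top eigenvector of `N`, hence positive everywhere when `N` is
irreducible, and termwise comparison of the quadratic forms gives `M = S N S` for the diagonal
matrix `S` of the signs of `x`. For the Laplacians this relation says that `S` switches `(Γ, -σ)` to
the all-positive signed graph, which by Harary's theorem is possible exactly if `(Γ, -σ)` is
balanced. -/

theorem cast_sign_mul_self {R : Type*} [Ring R] (ε : ℤˣ) : ((ε : ℤ) : R) * (ε : ℤ) = 1 := by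
  rw [← Int.cast_mul, Int.units_coe_mul_self, Int.cast_one]

section Balance

variable {V : Type*} {G : SimpleGraph V} {σ : Sym2 V → ℤˣ} {u v w : V}

theorem walkSign_cons (h : G.Adj u v) (p : G.Walk v w) :
    walkSign G σ (.cons h p) = σ s(u, v) * walkSign G σ p := by
  simp [walkSign]

theorem walkSign_append (p : G.Walk u v) (q : G.Walk v w) :
    walkSign G σ (p.append q) = walkSign G σ p * walkSign G σ q := by
  simp [walkSign]

theorem walkSign_reverse (p : G.Walk u v) : walkSign G σ p.reverse = walkSign G σ p := by
  simp [walkSign, List.prod_reverse]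

theorem walkSign_copy {u' v' : V} (p : G.Walk u v) (hu : u = u') (hv : v = v') :
    walkSign G σ (p.copy hu hv) = walkSign G σ p := by
  simp [walkSign]

theorem sgBalanced.walkSign_cons_of_isPath (hb : sgBalanced G σ) (h : G.Adj u v) {p : G.Walk v u}
    (hp : p.IsPath) : walkSign G σ (.cons h p) = 1 := by
  by_cases he : s(u, v) ∈ p.edges
  · rw [hp.eq_adj_toWalk_of_mem_edges (Sym2.eq_swap ▸ he)]
    simp [walkSign, Sym2.eq_swap (a := v), Int.units_mul_self]
  · exact hb _ ((SimpleGraph.Walk.cons_isCycle_iff p h).2 ⟨hp, he⟩)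

theorem sgBalanced.walkSign_bypass [DecidableEq V] (hb : sgBalanced G σ) (p : G.Walk u v) :
    walkSign G σ p.bypass = walkSign G σ p := by
  induction p with
  | nil => rfl
  | @cons a b _ h p ih =>
    rw [walkSign_cons, ← ih, SimpleGraph.Walk.bypass]
    split_ifs with ha
    · have hloop := hb.walkSign_cons_of_isPath h (p.bypass_isPath.takeUntil ha)
      calc walkSign G σ (p.bypass.dropUntil a ha)
          = walkSign G σ (.cons h (p.bypass.takeUntil a ha)) *
              walkSign G σ (p.bypass.dropUntil a ha) := by rw [hloop, one_mul]
        _ = σ s(a, b) * walkSign G σ p.bypass := by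
            rw [walkSign_cons, mul_assoc, ← walkSign_append, SimpleGraph.Walk.take_spec]
    · rw [walkSign_cons]

theorem sgBalanced.walkSign_closed (hb : sgBalanced G σ) (p : G.Walk u u) :
    walkSign G σ p = 1 := by
  classical
  rw [← hb.walkSign_bypass p, (SimpleGraph.Walk.isPath_iff_nil.1 p.bypass_isPath).eq_nil]
  rfl

variable (G σ) in
/-- A potential of the signed graph `(G, σ)`: a `±1`-valued function on the vertices that switches
`(G, σ)` to the all-positive signed graph. Its existence is Harary's criterion for balance. -/
def IsSignPotential (s : V → ℤˣ) : Prop :=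
  ∀ ⦃u v⦄, G.Adj u v → σ s(u, v) = s u * s v

theorem IsSignPotential.walkSign_eq {s : V → ℤˣ} (hs : IsSignPotential G σ s) (p : G.Walk u v) :
    walkSign G σ p = s u * s v := by
  induction p with
  | nil => exact (Int.units_mul_self _).symm
  | @cons a b c h p ih =>
    rw [walkSign_cons, ih, hs h, mul_assoc, ← mul_assoc (s b), Int.units_mul_self, one_mul]

theorem sgBalanced.exists_isSignPotential (hb : sgBalanced G σ) : ∃ s, IsSignPotential G σ s := by
  have exists_walk (v : V) : Nonempty (G.Walk (G.connectedComponentMk v).out v) :=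
    SimpleGraph.ConnectedComponent.exact (Quot.out_eq _)
  let w (v : V) : G.Walk (G.connectedComponentMk v).out v := (exists_walk v).some
  refine ⟨fun v => walkSign G σ (w v), fun u v h => ?_⟩
  have same_root : (G.connectedComponentMk v).out = (G.connectedComponentMk u).out :=
    congrArg Quot.out (SimpleGraph.ConnectedComponent.sound h.symm.reachable)
  have hclosed := hb.walkSign_closed
    ((w u).append (.cons h ((w v).reverse.copy rfl same_root)))
  rw [walkSign_append, walkSign_cons, walkSign_copy, walkSign_reverse, mul_left_comm,
    mul_eq_one_iff_eq_inv, Int.units_inv_eq_self] at hclosed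
  exact hclosed

theorem sgBalanced_iff_exists_isSignPotential : sgBalanced G σ ↔ ∃ s, IsSignPotential G σ s :=
  ⟨sgBalanced.exists_isSignPotential, fun ⟨s, hs⟩ v p _ => by
    rw [hs.walkSign_eq p, Int.units_mul_self]⟩

end Balance

section MaxEigenvalue

open Matrix

variable {V : Type*} [Fintype V] [DecidableEq V]

theorem dotProduct_smul_one_sub_mulVec {R : Type*} [CommRing R] (M : Matrix V V R) (c : R)
    (x : V → R) :
    x ⬝ᵥ (c • (1 : Matrix V V R) - M) *ᵥ x = c * (x ⬝ᵥ x) - x ⬝ᵥ M *ᵥ x := by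
  rw [sub_mulVec, dotProduct_sub, smul_mulVec, one_mulVec, dotProduct_smul, smul_eq_mul]

variable [Nonempty V] {M : Matrix V V ℝ}

theorem isGreatest_maxEigenvalue (hM : M.IsHermitian) :
    IsGreatest (spectrum ℝ M) (maxEigenvalue M) := by
  have hfin : (spectrum ℝ M).Finite :=
    hM.spectrum_real_eq_range_eigenvalues ▸ Set.finite_range _
  have hne : (spectrum ℝ M).Nonempty :=
    hM.spectrum_real_eq_range_eigenvalues ▸ Set.range_nonempty _
  exact ⟨hne.csSup_mem hfin, fun c hc => le_csSup hfin.bddAbove hc⟩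

theorem exists_mulVec_eq_maxEigenvalue_smul (hM : M.IsHermitian) :
    ∃ x : V → ℝ, x ≠ 0 ∧ M *ᵥ x = maxEigenvalue M • x := by
  have h := (isGreatest_maxEigenvalue hM).1
  rw [← Matrix.spectrum_toLin', ← Module.End.hasEigenvalue_iff_mem_spectrum] at h
  obtain ⟨x, hx⟩ := h.exists_hasEigenvector
  exact ⟨x, hx.2, hx.apply_eq_smul⟩

theorem posSemidef_maxEigenvalue_smul_one_sub (hM : M.IsHermitian) :
    (maxEigenvalue M • (1 : Matrix V V ℝ) - M).PosSemidef := by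
  rw [Matrix.posSemidef_iff_isHermitian_and_spectrum_nonneg]
  refine ⟨(isHermitian_one.smul (.all _)).sub hM, fun c hc => ?_⟩
  rw [← Algebra.algebraMap_eq_smul_one, ← spectrum.singleton_sub_eq] at hc
  obtain ⟨_, rfl, μ, hμ, rfl⟩ := hc
  exact sub_nonneg.2 ((isGreatest_maxEigenvalue hM).2 hμ)

theorem dotProduct_mulVec_le_maxEigenvalue_mul (hM : M.IsHermitian) (x : V → ℝ) :
    x ⬝ᵥ M *ᵥ x ≤ maxEigenvalue M * (x ⬝ᵥ x) := by
  have h := (posSemidef_maxEigenvalue_smul_one_sub hM).dotProduct_mulVec_nonneg x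
  rwa [star_trivial, dotProduct_smul_one_sub_mulVec, sub_nonneg] at h

theorem dotProduct_mulVec_eq_maxEigenvalue_mul_iff (hM : M.IsHermitian) (x : V → ℝ) :
    x ⬝ᵥ M *ᵥ x = maxEigenvalue M * (x ⬝ᵥ x) ↔ M *ᵥ x = maxEigenvalue M • x := by
  have h := (posSemidef_maxEigenvalue_smul_one_sub hM).dotProduct_mulVec_zero_iff x
  rwa [star_trivial, dotProduct_smul_one_sub_mulVec, sub_mulVec, smul_mulVec, one_mulVec,
    sub_eq_zero, sub_eq_zero, eq_comm, eq_comm (a := _ • x)] at h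

end MaxEigenvalue

section EntrywiseDomination

open Matrix

theorem dotProduct_mulVec_eq_sum_sum {V R : Type*} [Fintype V] [NonUnitalSemiring R]
    (M : Matrix V V R) (x : V → R) :
    x ⬝ᵥ M *ᵥ x = ∑ i, ∑ j, x i * M i j * x j := by
  simp only [dotProduct, mulVec, Finset.mul_sum, mul_assoc]

theorem abs_dotProduct_abs {V R : Type*} [Fintype V] [Ring R] [LinearOrder R]
    (x : V → R) : |x| ⬝ᵥ |x| = x ⬝ᵥ x := by
  simp only [dotProduct, Pi.abs_apply, abs_mul_abs_self]

variable {V R : Type*} [CommRing R] [LinearOrder R] [IsStrictOrderedRing R]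
  {M N : Matrix V V R} {x : V → R}

theorem mul_mul_le_abs_mul_mul_abs (hMN : ∀ i j, |M i j| ≤ N i j) (x : V → R) (i j : V) :
    x i * M i j * x j ≤ |x| i * N i j * |x| j :=
  calc x i * M i j * x j ≤ |x i * M i j * x j| := le_abs_self _
    _ = |x i| * |M i j| * |x j| := by rw [abs_mul, abs_mul]
    _ ≤ |x i| * N i j * |x j| := by gcongr; exact hMN i j

theorem exists_sign_mul_of_mul_mul_eq (hx : ∀ i, x i ≠ 0)
    (h : ∀ i j, x i * M i j * x j = |x| i * N i j * |x| j) :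
    ∃ s : V → ℤˣ, ∀ i j, M i j = (s i : ℤ) * (s j : ℤ) * N i j := by
  have exists_sign (i : V) : ∃ ε : ℤˣ, |x| i = (ε : ℤ) * x i := by
    obtain hi | hi := abs_choice (x i)
    exacts [⟨1, by simpa using hi⟩, ⟨-1, by simpa using hi⟩]
  choose s hs using exists_sign
  refine ⟨s, fun i j => mul_left_cancel₀ (mul_ne_zero (hx i) (hx j)) ?_⟩
  have hij := h i j
  rw [hs i, hs j] at hij
  linear_combination hij

variable [Fintype V]

theorem dotProduct_mulVec_le_abs (hMN : ∀ i j, |M i j| ≤ N i j) (x : V → R) :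
    x ⬝ᵥ M *ᵥ x ≤ |x| ⬝ᵥ N *ᵥ |x| := by
  simp only [dotProduct_mulVec_eq_sum_sum]
  exact Finset.sum_le_sum fun i _ => Finset.sum_le_sum fun j _ =>
    mul_mul_le_abs_mul_mul_abs hMN x i j

theorem mul_mul_eq_of_dotProduct_mulVec_eq_abs (hMN : ∀ i j, |M i j| ≤ N i j)
    (h : x ⬝ᵥ M *ᵥ x = |x| ⬝ᵥ N *ᵥ |x|) (i j : V) :
    x i * M i j * x j = |x| i * N i j * |x| j := by
  have hle := mul_mul_le_abs_mul_mul_abs hMN x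
  simp only [dotProduct_mulVec_eq_sum_sum] at h
  have hrow := (Finset.sum_eq_sum_iff_of_le fun i _ => Finset.sum_le_sum fun j _ => hle i j).1 h
  exact (Finset.sum_eq_sum_iff_of_le fun j _ => hle i j).1 (hrow i (Finset.mem_univ i)) j
    (Finset.mem_univ j)

theorem pos_of_mulVec_eq_smul {G : SimpleGraph V} (hG : G.Preconnected) (hN : ∀ i j, 0 ≤ N i j)
    (hGN : ∀ ⦃i j⦄, G.Adj i j → 0 < N i j) {y : V → R} (hy : 0 ≤ y) (hy₀ : y ≠ 0) {c : R}
    (hyc : N *ᵥ y = c • y) (i : V) : 0 < y i := by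
  have zero_of_adj {i j : V} (hij : G.Adj i j) (hi : y i = 0) : y j = 0 := by
    have hsum : ∑ k, N i k * y k = 0 := by
      simpa [mulVec, dotProduct, hi] using congrFun hyc i
    have hterm := (Finset.sum_eq_zero_iff_of_nonneg fun k _ => mul_nonneg (hN i k) (hy k)).1 hsum j
      (Finset.mem_univ j)
    exact (mul_eq_zero.1 hterm).resolve_left (hGN hij).ne'
  have zero_of_walk {i j : V} (p : G.Walk i j) : y i = 0 → y j = 0 := by
    induction p with
    | nil => exact id
    | cons h _ ih => exact ih ∘ zero_of_adj h
  refine (hy i).lt_of_ne' fun hi => hy₀ (funext fun j => ?_)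
  obtain ⟨p⟩ := hG i j
  exact zero_of_walk p hi

end EntrywiseDomination

section Wielandt

open Matrix

variable {V : Type*} [Fintype V] [DecidableEq V] {M N : Matrix V V ℝ}

theorem maxEigenvalue_le_of_abs_le [Nonempty V] (hM : M.IsHermitian) (hN : N.IsHermitian)
    (hMN : ∀ i j, |M i j| ≤ N i j) : maxEigenvalue M ≤ maxEigenvalue N := by
  obtain ⟨x, hx₀, hx⟩ := exists_mulVec_eq_maxEigenvalue_smul hM
  refine le_of_mul_le_mul_right ?_ (by simpa using dotProduct_star_self_pos_iff.2 hx₀ : 0 < x ⬝ᵥ x)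
  calc maxEigenvalue M * (x ⬝ᵥ x) = x ⬝ᵥ M *ᵥ x :=
        ((dotProduct_mulVec_eq_maxEigenvalue_mul_iff hM x).2 hx).symm
    _ ≤ |x| ⬝ᵥ N *ᵥ |x| := dotProduct_mulVec_le_abs hMN x
    _ ≤ maxEigenvalue N * (|x| ⬝ᵥ |x|) := dotProduct_mulVec_le_maxEigenvalue_mul hN |x|
    _ = maxEigenvalue N * (x ⬝ᵥ x) := by rw [abs_dotProduct_abs]

theorem exists_sign_mul_of_maxEigenvalue_eq {G : SimpleGraph V} (hG : G.Connected)
    (hM : M.IsHermitian) (hN : N.IsHermitian) (hMN : ∀ i j, |M i j| ≤ N i j)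
    (hGN : ∀ ⦃i j⦄, G.Adj i j → 0 < N i j) (heq : maxEigenvalue N = maxEigenvalue M) :
    ∃ s : V → ℤˣ, ∀ i j, M i j = (s i : ℤ) * (s j : ℤ) * N i j := by
  have := hG.nonempty
  obtain ⟨x, hx₀, hx⟩ := exists_mulVec_eq_maxEigenvalue_smul hM
  have hMx : x ⬝ᵥ M *ᵥ x = maxEigenvalue N * (|x| ⬝ᵥ |x|) := by
    rw [heq, abs_dotProduct_abs, (dotProduct_mulVec_eq_maxEigenvalue_mul_iff hM x).2 hx]
  have hNx : |x| ⬝ᵥ N *ᵥ |x| = maxEigenvalue N * (|x| ⬝ᵥ |x|) :=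
    (dotProduct_mulVec_le_maxEigenvalue_mul hN |x|).antisymm
      (hMx ▸ dotProduct_mulVec_le_abs hMN x)
  have habs₀ : |x| ≠ 0 := fun h => hx₀ (funext fun i => abs_eq_zero.1 (congrFun h i))
  have hxpos : ∀ i, 0 < |x| i :=
    pos_of_mulVec_eq_smul hG.preconnected (fun i j => (abs_nonneg _).trans (hMN i j)) hGN
      (abs_nonneg x) habs₀ ((dotProduct_mulVec_eq_maxEigenvalue_mul_iff hN _).1 hNx)
  exact exists_sign_mul_of_mul_mul_eq (fun i => abs_pos.1 (hxpos i))
    (mul_mul_eq_of_dotProduct_mulVec_eq_abs hMN (hMx.trans hNx.symm))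

theorem maxEigenvalue_eq_of_sign_mul {s : V → ℤˣ}
    (hs : ∀ i j, M i j = (s i : ℤ) * (s j : ℤ) * N i j) : maxEigenvalue M = maxEigenvalue N := by
  let d : V → ℝ := fun i => (s i : ℤ)
  have hd : diagonal d * diagonal d = 1 := by
    rw [diagonal_mul_diagonal, ← diagonal_one]
    congr 1 with i
    exact cast_sign_mul_self (s i)
  let S : (Matrix V V ℝ)ˣ := ⟨diagonal d, diagonal d, hd, hd⟩
  have hconj : M = (S : Matrix V V ℝ) * N * (S⁻¹ : (Matrix V V ℝ)ˣ) := by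
    ext i j
    change M i j = (diagonal d * N * diagonal d) i j
    rw [mul_diagonal, diagonal_mul, hs]
    ring
  rw [maxEigenvalue, maxEigenvalue, hconj, spectrum.units_conjugate]

theorem maxEigenvalue_eq_iff_exists_sign_mul {G : SimpleGraph V} (hG : G.Connected)
    (hM : M.IsHermitian) (hN : N.IsHermitian) (hMN : ∀ i j, |M i j| ≤ N i j)
    (hGN : ∀ ⦃i j⦄, G.Adj i j → 0 < N i j) :
    maxEigenvalue N = maxEigenvalue M ↔
      ∃ s : V → ℤˣ, ∀ i j, M i j = (s i : ℤ) * (s j : ℤ) * N i j :=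
  ⟨exists_sign_mul_of_maxEigenvalue_eq hG hM hN hMN hGN,
    fun ⟨_, hs⟩ => (maxEigenvalue_eq_of_sign_mul hs).symm⟩

end Wielandt

section Laplacian

variable {V : Type*} [Fintype V] [DecidableEq V] {G : SimpleGraph V} [DecidableRel G.Adj]
  {i j : V}

theorem isHermitian_sgLapMatrix (σ : Sym2 V → ℤˣ) : (sgLapMatrix G σ).IsHermitian := by
  refine (Matrix.isHermitian_diagonal _).sub ?_
  ext i j
  simp [sgAdjMatrix, G.adj_comm i j, Sym2.eq_swap (a := i)]

theorem sgLapMatrix_apply_self (σ : Sym2 V → ℤˣ) (i : V) : sgLapMatrix G σ i i = G.degree i := by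
  simp [sgLapMatrix, sgAdjMatrix]

theorem sgLapMatrix_apply_of_adj (σ : Sym2 V → ℤˣ) (h : G.Adj i j) :
    sgLapMatrix G σ i j = -(σ s(i, j) : ℤ) := by
  simp [sgLapMatrix, sgAdjMatrix, h, h.ne]

theorem sgLapMatrix_apply_of_not_adj (σ : Sym2 V → ℤˣ) (hij : i ≠ j) (h : ¬G.Adj i j) :
    sgLapMatrix G σ i j = 0 := by
  simp [sgLapMatrix, sgAdjMatrix, h, hij]

theorem abs_sgLapMatrix_apply (σ : Sym2 V → ℤˣ) (i j : V) :
    |sgLapMatrix G σ i j| = sgLapMatrix G (fun _ => -1) i j := by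
  obtain rfl | hij := eq_or_ne i j
  · simp only [sgLapMatrix_apply_self, Nat.abs_cast]
  by_cases h : G.Adj i j
  · rw [sgLapMatrix_apply_of_adj _ h, sgLapMatrix_apply_of_adj _ h]
    obtain hσ | hσ := Int.units_eq_one_or (σ s(i, j)) <;> simp [hσ]
  · simp only [sgLapMatrix_apply_of_not_adj _ hij h, abs_zero]

theorem sgLapMatrix_allNegative_pos_of_adj (h : G.Adj i j) :
    0 < sgLapMatrix G (fun _ => -1) i j := by
  simp [sgLapMatrix_apply_of_adj _ h]

theorem sgLapMatrix_eq_sign_mul_iff {σ : Sym2 V → ℤˣ} {s : V → ℤˣ} :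
    (∀ i j, sgLapMatrix G σ i j = (s i : ℤ) * (s j : ℤ) * sgLapMatrix G (fun _ => -1) i j) ↔
      IsSignPotential G (fun e => -σ e) s := by
  have entry_iff {i j : V} (h : G.Adj i j) :
      sgLapMatrix G σ i j = (s i : ℤ) * (s j : ℤ) * sgLapMatrix G (fun _ => -1) i j ↔
        -σ s(i, j) = s i * s j := by
    rw [sgLapMatrix_apply_of_adj _ h, sgLapMatrix_apply_of_adj _ h, ← Units.val_inj]
    push_cast
    rw [neg_neg, mul_one]
    norm_cast
  refine ⟨fun hs i j h => (entry_iff h).1 (hs i j), fun hs i j => ?_⟩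
  obtain rfl | hij := eq_or_ne i j
  · rw [sgLapMatrix_apply_self, sgLapMatrix_apply_self, cast_sign_mul_self, one_mul]
  by_cases h : G.Adj i j
  · exact (entry_iff h).2 (hs h)
  · rw [sgLapMatrix_apply_of_not_adj _ hij h, sgLapMatrix_apply_of_not_adj _ hij h, mul_zero]

end Laplacian

/-- For a connected graph `Γ` and any signature `σ`, the largest Laplacian eigenvalue of
the all-negative signed graph `-Γ` is at least that of `(Γ, σ)`, with equality iff
`(Γ, σ)` is antibalanced. -/
theorem lapMax_allNegative_ge {V : Type*} [Fintype V] [DecidableEq V]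
    (G : SimpleGraph V) [DecidableRel G.Adj] (σ : Sym2 V → ℤˣ)
    (hconn : G.Connected) :
    maxEigenvalue (sgLapMatrix G (fun _ => -1)) ≥ maxEigenvalue (sgLapMatrix G σ) ∧
    (maxEigenvalue (sgLapMatrix G (fun _ => -1)) = maxEigenvalue (sgLapMatrix G σ) ↔
      sgAntibalanced G σ) := by
  have := hconn.nonempty
  have hdom : ∀ i j, |sgLapMatrix G σ i j| ≤ sgLapMatrix G (fun _ => -1) i j :=
    fun i j => (abs_sgLapMatrix_apply σ i j).le
  refine ⟨maxEigenvalue_le_of_abs_le (isHermitian_sgLapMatrix σ) (isHermitian_sgLapMatrix _) hdom,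
    ?_⟩
  rw [maxEigenvalue_eq_iff_exists_sign_mul hconn (isHermitian_sgLapMatrix σ)
      (isHermitian_sgLapMatrix _) hdom fun _ _ => sgLapMatrix_allNegative_pos_of_adj,
    sgAntibalanced, sgBalanced_iff_exists_isSignPotential]
  exact exists_congr fun _ => sgLapMatrix_eq_sign_mul_iff
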